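/- Let F be a monotone hazard rate probability distribution supported on the non-negative reals with density f and strictly increasing virtual valuation φ. Then for every z ≥ 0, F(φ⁻¹(z)) ≤ 1 − (1/e)·(1−F(z)). -/

import Mathlib

open MeasureTheory Real Set

/-!
Let `S = 1 - F` and `w = φ⁻¹(z)`. Since `φ(w) = w - 1 / h(w)`, the point `w` lies exactly
`1 / h(w)` to the right of `z`. On `[z, w]` the hazard rate `-S' / S` is at most `h(w)`, so `S`
decays at most exponentially at rate `h(w)`, and over an interval of length `1 / h(w)` it loses at
most a factor `e`.
-/

/-- The hazard rate at `x` of a distribution with density `f` and cumulative distribution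
function `F`, which are independent arguments; it is `0` by convention where `F x = 1`. -/
noncomputable def hazardRate (f F : ℝ → ℝ) (x : ℝ) : ℝ :=
  f x / (1 - F x)

/-- The virtual valuation (in Myerson's sense) at `x` of a distribution with density `f` and
cumulative distribution function `F`; it is `x` by convention where `f x = 0`. -/
noncomputable def virtualValuation (f F : ℝ → ℝ) (x : ℝ) : ℝ :=
  x - (1 - F x) / f x

theorem monotoneOn_mul_exp_of_neg_mul_le_deriv {S S' : ℝ → ℝ} {K : ℝ} {s : Set ℝ}
    (hs : Convex ℝ s) (hS : ContinuousOn S s)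
    (hS' : ∀ x ∈ interior s, HasDerivWithinAt S (S' x) (interior s) x)
    (hK : ∀ x ∈ interior s, -(K * S x) ≤ S' x) :
    MonotoneOn (fun x ↦ S x * exp (K * x)) s := by
  refine monotoneOn_of_hasDerivWithinAt_nonneg
    (f' := fun x ↦ S' x * exp (K * x) + S x * (exp (K * x) * (K * 1)))
    hs (hS.mul (by fun_prop)) (fun x hx ↦ ?_) (fun x hx ↦ ?_)
  · exact (hS' x hx).mul ((hasDerivWithinAt_id x _).const_mul K).exp
  · calc 0 ≤ (S' x + K * S x) * exp (K * x) :=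
          mul_nonneg (by linarith [hK x hx]) (exp_pos _).le
      _ = S' x * exp (K * x) + S x * (exp (K * x) * (K * 1)) := by ring

theorem le_mul_exp_of_neg_mul_le_deriv {S S' : ℝ → ℝ} {K a b : ℝ} (hab : a ≤ b)
    (hS : ContinuousOn S (Icc a b)) (hS' : ∀ x ∈ Ioo a b, HasDerivAt S (S' x) x)
    (hK : ∀ x ∈ Ioo a b, -(K * S x) ≤ S' x) :
    S a ≤ S b * exp (K * (b - a)) := by
  rw [← interior_Icc] at hS' hK
  have hmono : S a * exp (K * a) ≤ S b * exp (K * b) :=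
    monotoneOn_mul_exp_of_neg_mul_le_deriv (convex_Icc a b) hS
      (fun x hx ↦ (hS' x hx).hasDerivWithinAt) hK
      (left_mem_Icc.2 hab) (right_mem_Icc.2 hab) hab
  rwa [mul_sub, exp_sub, ← mul_div_assoc, le_div_iff₀ (exp_pos _)]

theorem hasDerivWithinAt_Ici_of_eq_integral {f F : ℝ → ℝ} {a x : ℝ}
    (hf : ContinuousOn f (Ici a)) (hF : ∀ y ∈ Ici a, F y = ∫ t in a..y, f t)
    (hx : x ∈ Ici a) : HasDerivWithinAt F (f x) (Ici a) x := by
  -- Extending `f` by the constant `f a` to the left of `a` makes it continuous on all of `ℝ`.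
  let g : ℝ → ℝ := fun t ↦ f (max t a)
  have hg : Continuous g := hf.comp_continuous (by fun_prop) fun t ↦ le_max_right t a
  have hgf : EqOn g f (Ici a) := fun t ht ↦ congrArg f (max_eq_left ht)
  have hFg : ∀ y ∈ Ici a, F y = ∫ t in a..y, g t := fun y hy ↦ by
    rw [hF y hy]
    refine intervalIntegral.integral_congr fun t ht ↦ (hgf ?_).symm
    rw [uIcc_of_le hy] at ht
    exact ht.1
  rw [← hgf hx]
  exact (hg.integral_hasStrictDerivAt a x).hasDerivAt.hasDerivWithinAt.congr hFg (hFg x hx)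

section HazardRate

variable {f F : ℝ → ℝ} {a b x K : ℝ}

theorem one_sub_le_mul_exp_of_hazardRate_le (hab : a ≤ b) (hF : ContinuousOn F (Icc a b))
    (hF' : ∀ x ∈ Ioo a b, HasDerivAt F (f x) x) (hF_lt : ∀ x ∈ Ioo a b, F x < 1)
    (hK : ∀ x ∈ Ioo a b, hazardRate f F x ≤ K) :
    1 - F a ≤ (1 - F b) * exp (K * (b - a)) := by
  refine le_mul_exp_of_neg_mul_le_deriv (S := fun x ↦ 1 - F x) hab (continuousOn_const.sub hF)
    (fun x hx ↦ (hF' x hx).const_sub 1) fun x hx ↦ neg_le_neg ?_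
  exact (div_le_iff₀ (sub_pos.2 (hF_lt x hx))).1 (hK x hx)

theorem virtualValuation_lt_self (hf : 0 < f x) (hF : F x < 1) : virtualValuation f F x < x :=
  sub_lt_self x (div_pos (sub_pos.2 hF) hf)

theorem hazardRate_mul_self_sub_virtualValuation (hf : f x ≠ 0) (hF : F x ≠ 1) :
    hazardRate f F x * (x - virtualValuation f F x) = 1 := by
  rw [hazardRate, virtualValuation, sub_sub_cancel, div_mul_div_cancel₀' hf,
    div_self (sub_ne_zero.2 hF.symm)]

theorem le_one_sub_inv_exp_mul_one_sub_virtualValuation (hf : 0 < f x)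
    (hF : ContinuousOn F (Icc (virtualValuation f F x) x))
    (hF' : ∀ y ∈ Ioo (virtualValuation f F x) x, HasDerivAt F (f y) y)
    (hF_lt : ∀ y ∈ Ioo (virtualValuation f F x) x, F y < 1) (hFx : F x < 1)
    (hh : ∀ y ∈ Ioo (virtualValuation f F x) x, hazardRate f F y ≤ hazardRate f F x) :
    F x ≤ 1 - 1 / exp 1 * (1 - F (virtualValuation f F x)) := by
  have hdecay := one_sub_le_mul_exp_of_hazardRate_le (virtualValuation_lt_self hf hFx).le hF hF'
    hF_lt hh
  rw [hazardRate_mul_self_sub_virtualValuation hf.ne' hFx.ne, ← div_le_iff₀ (exp_pos 1)] at hdecay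
  rw [one_div_mul_eq_div]
  linarith

end HazardRate

theorem stmt_2
(f F : ℝ → ℝ)
    (hf_cont : ContinuousOn f (Ici 0))
    (hf_pos : ∀ z ∈ Ici (0:ℝ), 0 < f z)
    (hF : ∀ z ∈ Ici (0:ℝ), F z = ∫ t in (0:ℝ)..z, f t)
    (hF_lt : ∀ z ∈ Ici (0:ℝ), F z < 1)
    (hprob : ∫ z in Ioi (0:ℝ), f z = 1)
(hMHR : ∀ y z : ℝ, 0 ≤ y → y ≤ z → f y / (1 - F y) ≤ f z / (1 - F z))
(φ ψ : ℝ → ℝ)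
    (hφ : ∀ z ∈ Ici (0:ℝ), φ z = z - (1 - F z) / f z)
    (hφ_mono : StrictMonoOn φ (Ici 0))
    (hφ_top : Filter.Tendsto φ Filter.atTop Filter.atTop)
    (hψ : ∀ y ∈ Ici (0:ℝ), ψ y ∈ Ici (0:ℝ) ∧ φ (ψ y) = y) :
    ∀ z : ℝ, 0 ≤ z → F (ψ z) ≤ 1 - (1 / Real.exp 1) * (1 - F z) := by
  intro z hz
  obtain ⟨hψ_nonneg, hφψ⟩ := hψ z hz
  have hvv : virtualValuation f F (ψ z) = z := (hφ _ hψ_nonneg).symm.trans hφψ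
  have hF_deriv : ∀ x ∈ Ici (0 : ℝ), HasDerivWithinAt F (f x) (Ici 0) x := fun x hx ↦
    hasDerivWithinAt_Ici_of_eq_integral hf_cont hF hx
  have hF_cont : ContinuousOn F (Ici 0) := fun x hx ↦ (hF_deriv x hx).continuousWithinAt
  have hpos : ∀ x ∈ Ioo z (ψ z), 0 < x := fun x hx ↦ hz.trans_lt hx.1
  have key := le_one_sub_inv_exp_mul_one_sub_virtualValuation (hf_pos _ hψ_nonneg) (F := F)
  rw [hvv] at key
  exact key (hF_cont.mono fun x hx ↦ hz.trans hx.1)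
    (fun x hx ↦ (hF_deriv x (hpos x hx).le).hasDerivAt (Ici_mem_nhds (hpos x hx)))
    (fun x hx ↦ hF_lt x (hz.trans hx.1.le)) (hF_lt _ hψ_nonneg)
    (fun x hx ↦ hMHR x _ (hpos x hx).le hx.2.le)
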